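/- arXiv:1101.5224 — 2 statements merged into one kernel-verified Lean document; each statement's English description precedes it below -/
import Mathlib

section
/- Let n ≥ 2 and R > 0, and let B_R(0) be the open ball of radius R centered at the origin in ℝⁿ. Then the first nonzero Neumann eigenvalue of the bi-harmonic operator on the ball equals the square of the first nonzero Neumann eigenvalue of the Laplacian on the ball: Υ₁(B_R(0)) = μ₁(B_R(0))². -/
open MeasureTheory Set Metric

noncomputable section

/-- The Laplacian of `f` (sum of second partial derivatives), with all derivatives
taken within the set `S`. -/
def lapWithin {n : ℕ} (S : Set (EuclideanSpace ℝ (Fin n)))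
    (f : EuclideanSpace ℝ (Fin n) → ℝ) (x : EuclideanSpace ℝ (Fin n)) : ℝ :=
  ∑ i : Fin n, fderivWithin ℝ
    (fun y => fderivWithin ℝ f S y (EuclideanSpace.single i 1)) S x (EuclideanSpace.single i 1)

/-- `μ` is a Neumann eigenvalue of the Laplacian on the ball `B_R(0) ⊂ ℝⁿ`: there is a nonzero
function `u`, smooth on the closed ball, with `Δu = −μ·u` in the open ball and vanishing outward
normal (i.e. radial) derivative on the boundary sphere. -/
def IsLapNeumannEigenvalueBall (n : ℕ) (R μ : ℝ) : Prop :=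
  ∃ u : EuclideanSpace ℝ (Fin n) → ℝ,
    ContDiffOn ℝ (⊤ : ℕ∞) u (closedBall 0 R) ∧
    (∃ x ∈ closedBall (0 : EuclideanSpace ℝ (Fin n)) R, u x ≠ 0) ∧
    (∀ x ∈ ball (0 : EuclideanSpace ℝ (Fin n)) R,
      lapWithin (closedBall 0 R) u x = -μ * u x) ∧
    (∀ x : EuclideanSpace ℝ (Fin n), ‖x‖ = R →
      fderivWithin ℝ u (closedBall 0 R) x (‖x‖⁻¹ • x) = 0)

/-- `Υ` is a Neumann eigenvalue of the bi-harmonic operator `Δ²` on the ball `B_R(0) ⊂ ℝⁿ`: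
there is a nonzero function `u`, smooth on the closed ball, with `Δ²u = Υ·u` in the open ball and
`∂u/∂n = ∂(Δu)/∂n = 0` on the boundary sphere. -/
def IsBiLapNeumannEigenvalueBall (n : ℕ) (R Υ : ℝ) : Prop :=
  ∃ u : EuclideanSpace ℝ (Fin n) → ℝ,
    ContDiffOn ℝ (⊤ : ℕ∞) u (closedBall 0 R) ∧
    (∃ x ∈ closedBall (0 : EuclideanSpace ℝ (Fin n)) R, u x ≠ 0) ∧
    (∀ x ∈ ball (0 : EuclideanSpace ℝ (Fin n)) R,
      lapWithin (closedBall 0 R) (lapWithin (closedBall 0 R) u) x = Υ * u x) ∧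
    (∀ x : EuclideanSpace ℝ (Fin n), ‖x‖ = R →
      fderivWithin ℝ u (closedBall 0 R) x (‖x‖⁻¹ • x) = 0) ∧
    (∀ x : EuclideanSpace ℝ (Fin n), ‖x‖ = R →
      fderivWithin ℝ (lapWithin (closedBall 0 R) u) (closedBall 0 R) x (‖x‖⁻¹ • x) = 0)

/-- `Υ` is a Neumann eigenvalue of the even-multi-Laplacian `Δ^(2m)` on the ball `B_R(0) ⊂ ℝⁿ`:
there is a nonzero function `u`, smooth on the closed ball, with `Δ^(2m)u = Υ·u` in the open ball
and `∂(Δʲu)/∂n = 0` on the boundary sphere for every `j = 0, 1, …, 2m−1`. -/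
def IsPolyLapNeumannEigenvalueBall (n m : ℕ) (R Υ : ℝ) : Prop :=
  ∃ u : EuclideanSpace ℝ (Fin n) → ℝ,
    ContDiffOn ℝ (⊤ : ℕ∞) u (closedBall 0 R) ∧
    (∃ x ∈ closedBall (0 : EuclideanSpace ℝ (Fin n)) R, u x ≠ 0) ∧
    (∀ x ∈ ball (0 : EuclideanSpace ℝ (Fin n)) R,
      (lapWithin (closedBall 0 R))^[2 * m] u x = Υ * u x) ∧
    (∀ j < 2 * m, ∀ x : EuclideanSpace ℝ (Fin n), ‖x‖ = R →
      fderivWithin ℝ ((lapWithin (closedBall 0 R))^[j] u) (closedBall 0 R) x (‖x‖⁻¹ • x) = 0)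
/-!
On functions satisfying the Neumann conditions, `Δ² - μ² = (Δ + μ)(Δ - μ)`. An eigenfunction of `-Δ`
for `μ` is thus one of `Δ²` for `μ²`. Conversely, if `Δ²u = μ²u` with `μ > 0`, then `(Δ - μ)u` is a
Neumann eigenfunction of `-Δ` for `μ`, unless it vanishes.

It does not vanish, because `Δu = μu` forces `u = 0` by a maximum principle. At a maximum of `u`,
possibly on the boundary, the Neumann condition makes the whole gradient vanish. The Hessian is then
nonpositive along inward directions, hence along all directions since it is even, so that
`μu = Δu ≤ 0` there. The same applies to `-u`.
-/

open Filter Topology InnerProductSpace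
open scoped ContDiff

section InwardDirection

variable {E : Type*} [NormedAddCommGroup E] [NormedSpace ℝ E] {S : Set E} {x v : E} {u : E → ℝ}

/-- `v` points from `x` into the interior of `S`, along a segment rather than merely to first
order, so that restricting a function on `S` to the ray from `x` along `v` gives a function that
is differentiable on the right of `0`. -/
def IsInwardDirection (S : Set E) (x v : E) : Prop :=
  ∀ᶠ t in 𝓝[>] (0 : ℝ), x + t • v ∈ interior S

lemma isInwardDirection_of_mem_interior (hx : x ∈ interior S) (v : E) :
    IsInwardDirection S x v := by
  have hline : ContinuousAt (fun t : ℝ => x + t • v) 0 := by fun_prop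
  refine (hline.eventually_mem ?_).filter_mono nhdsWithin_le_nhds
  simpa using isOpen_interior.mem_nhds hx

namespace IsInwardDirection

lemma mem_posTangentConeAt (hv : IsInwardDirection S x v) : v ∈ posTangentConeAt S x :=
  mem_posTangentConeAt_of_frequently_mem (hv.mono fun _ ht => interior_subset ht).frequently

lemma mem_tangentConeAt (hv : IsInwardDirection S x v) : v ∈ tangentConeAt ℝ S x :=
  tangentConeAt_mono_field hv.mem_posTangentConeAt

lemma tendsto_line (hv : IsInwardDirection S x v) :
    Tendsto (fun t : ℝ => x + t • v) (𝓝[>] 0) (𝓝[interior S] x) := by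
  have hline : ContinuousAt (fun t : ℝ => x + t • v) 0 := by fun_prop
  refine tendsto_nhdsWithin_iff.2 ⟨?_, hv⟩
  simpa using hline.tendsto.mono_left nhdsWithin_le_nhds

lemma mem_closure_interior (hv : IsInwardDirection S x v) : x ∈ closure (interior S) :=
  mem_closure_iff_nhdsWithin_neBot.2 (hv.tendsto_line.neBot)

end IsInwardDirection

lemma second_deriv_nonpos_of_eventually_le {φ ψ : ℝ → ℝ} {t₀ a : ℝ}
    (hφ : ContinuousWithinAt φ (Ioi t₀) t₀) (hφ' : ∀ᶠ t in 𝓝[>] t₀, HasDerivAt φ (ψ t) t)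
    (hψ : HasDerivWithinAt ψ a (Ioi t₀) t₀) (hψ₀ : ψ t₀ = 0)
    (hmax : ∀ᶠ t in 𝓝[>] t₀, φ t ≤ φ t₀) : a ≤ 0 := by
  by_contra! ha
  have hψ_pos : ∀ᶠ t in 𝓝[>] t₀, 0 < ψ t := by
    filter_upwards [((hasDerivWithinAt_iff_tendsto_slope' self_notMem_Ioi).1 hψ).eventually_const_lt
      ha, self_mem_nhdsWithin] with t hslope ht
    rw [slope_def_field, hψ₀, sub_zero] at hslope
    exact (div_pos_iff_of_pos_right (sub_pos.2 ht)).1 hslope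
  obtain ⟨b, hb : t₀ < b, hIoc⟩ :=
    mem_nhdsGT_iff_exists_Ioc_subset.1 (hφ'.and (hψ_pos.and hmax))
  have hcont : ContinuousOn φ (Icc t₀ b) := fun t ht => by
    rcases ht.1.eq_or_lt with rfl | hlt
    · exact (continuousWithinAt_Ioi_iff_Ici.1 hφ).mono Icc_subset_Ici_self
    · exact (hIoc ⟨hlt, ht.2⟩).1.continuousAt.continuousWithinAt
  have hmono : StrictMonoOn φ (Icc t₀ b) :=
    strictMonoOn_of_deriv_pos (convex_Icc t₀ b) hcont fun t ht => by
      rw [interior_Icc] at ht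
      obtain ⟨hderiv, hpos, -⟩ := hIoc (Ioo_subset_Ioc_self ht)
      rwa [hderiv.deriv]
  exact (hmono (left_mem_Icc.2 hb.le) (right_mem_Icc.2 hb.le) hb).not_ge
    (hIoc (right_mem_Ioc.2 hb)).2.2

lemma second_fderivWithin_nonpos_of_isLocalMaxOn (hu : DifferentiableOn ℝ u S)
    (hu' : DifferentiableWithinAt ℝ (fderivWithin ℝ u S) S x) (hx : x ∈ S)
    (hmax : IsLocalMaxOn u S x) (hcrit : fderivWithin ℝ u S x = 0)
    (hv : IsInwardDirection S x v) :
    fderivWithin ℝ (fderivWithin ℝ u S) S x v v ≤ 0 := by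
  set line : ℝ → E := fun t => x + t • v
  have hline (t : ℝ) : HasDerivAt line v t := by
    simpa [line] using (hasDerivAt_id t).smul_const v
  have hline₀ : line 0 = x := by simp [line]
  have htends : Tendsto line (𝓝[>] 0) (𝓝[S] x) :=
    hv.tendsto_line.mono_right (nhdsWithin_mono x interior_subset)
  refine second_deriv_nonpos_of_eventually_le (φ := u ∘ line)
    (ψ := fun t => fderivWithin ℝ u S (line t) v) (t₀ := 0) ?_ ?_ ?_ (by simp [hline₀, hcrit]) ?_
  · rw [ContinuousWithinAt, Function.comp_apply, hline₀]
    exact (hu.continuousOn x hx).tendsto.comp htends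
  · filter_upwards [hv] with t ht
    have hS : S ∈ 𝓝 (line t) := mem_interior_iff_mem_nhds.1 ht
    exact ((hu _ (interior_subset ht)).hasFDerivWithinAt.hasFDerivAt hS).comp_hasDerivAt t (hline t)
  · have hderiv : HasDerivWithinAt (fun t => fderivWithin ℝ u S (line t))
        (fderivWithin ℝ (fderivWithin ℝ u S) S x v) (line ⁻¹' S) 0 := by
      rw [← hline₀] at hu' ⊢
      exact hu'.hasFDerivWithinAt.comp_hasDerivWithinAt 0 (hline 0).hasDerivWithinAt
        (mapsTo_preimage line S)
    have hpre : line ⁻¹' S ∈ 𝓝[>] (0 : ℝ) := htends self_mem_nhdsWithin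
    simpa using (hderiv.mono_of_mem_nhdsWithin hpre).clm_apply (hasDerivWithinAt_const 0 _ v)
  · simpa [hline₀] using htends.eventually hmax

end InwardDirection

section ZeroNormalDeriv

variable {E : Type*} [NormedAddCommGroup E] [NormedSpace ℝ E] {S : Set E} {ν : E → E} {u w : E → ℝ}

/-- The homogeneous Neumann condition `∂u/∂n = 0` on the boundary of `S`, for a
given normal field `ν`. -/
def HasZeroNormalDeriv (S : Set E) (ν : E → E) (u : E → ℝ) : Prop :=
  ∀ x ∈ frontier S, fderivWithin ℝ u S x (ν x) = 0

namespace HasZeroNormalDeriv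

lemma const_smul (hu : HasZeroNormalDeriv S ν u) (hS : UniqueDiffOn ℝ S) (hSc : IsClosed S)
    (c : ℝ) : HasZeroNormalDeriv S ν (c • u) := fun x hx => by
  rw [fderivWithin_const_smul_field c (hS x (hSc.frontier_subset hx)),
    smul_apply, hu x hx, smul_zero]

lemma sub (hu : HasZeroNormalDeriv S ν u) (hw : HasZeroNormalDeriv S ν w)
    (hS : UniqueDiffOn ℝ S) (hSc : IsClosed S) (hud : DifferentiableOn ℝ u S)
    (hwd : DifferentiableOn ℝ w S) : HasZeroNormalDeriv S ν (u - w) := fun x hx => by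
  have hxS := hSc.frontier_subset hx
  rw [fderivWithin_sub (hS x hxS) (hud x hxS) (hwd x hxS), sub_apply, hu x hx, hw x hx,
    sub_zero]

lemma congr (hu : HasZeroNormalDeriv S ν u) (hSc : IsClosed S) (h : EqOn w u S) :
    HasZeroNormalDeriv S ν w := fun x hx => by
  rw [fderivWithin_congr h (h (hSc.frontier_subset hx)), hu x hx]

end HasZeroNormalDeriv

end ZeroNormalDeriv

section OutwardNormal

variable {E : Type*} [NormedAddCommGroup E] [InnerProductSpace ℝ E] {S : Set E} {ν : E → E}
  {u : E → ℝ} {x : E}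

/-- `ν` is an outward normal field, not necessarily of unit length, along the boundary of `S`.
Only the property of `C¹` domains used by the maximum principle is recorded: every vector making
an obtuse angle with the normal points into the interior. -/
structure IsOutwardNormal (S : Set E) (ν : E → E) : Prop where
  ne_zero : ∀ x ∈ frontier S, ν x ≠ 0
  isInwardDirection : ∀ x ∈ frontier S, ∀ v, ⟪ν x, v⟫_ℝ < 0 → IsInwardDirection S x v

namespace IsOutwardNormal

lemma dense_isInwardDirection_or_neg (hν : IsOutwardNormal S ν) (hx : x ∈ S) :
    Dense {v | IsInwardDirection S x v ∨ IsInwardDirection S x (-v)} := by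
  by_cases hint : x ∈ interior S
  · simp [isInwardDirection_of_mem_interior hint]
  have hfr : x ∈ frontier S := ⟨subset_closure hx, hint⟩
  have hne : innerSL ℝ (ν x) ≠ 0 := fun h => hν.ne_zero x hfr <| by
    simpa using DFunLike.congr_fun h (ν x)
  refine ((dense_compl_singleton (0 : ℝ)).preimage
    ((innerSL ℝ (ν x)).isOpenMap_of_ne_zero hne)).mono fun v hv => ?_
  have hv : ⟪ν x, v⟫_ℝ ≠ 0 := hv
  refine hv.lt_or_gt.imp (hν.isInwardDirection x hfr v) fun hpos => ?_
  exact hν.isInwardDirection x hfr (-v) (by simpa using hpos)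

lemma uniqueDiffOn (hν : IsOutwardNormal S ν) : UniqueDiffOn ℝ S := fun x hx => by
  refine ⟨(hν.dense_isInwardDirection_or_neg hx).mono ?_, subset_closure hx⟩
  rintro v (hv | hv)
  · exact Submodule.subset_span hv.mem_tangentConeAt
  · exact neg_mem_iff.1 (Submodule.subset_span hv.mem_tangentConeAt)

lemma subset_closure_interior (hν : IsOutwardNormal S ν) : S ⊆ closure (interior S) :=
  fun x hx => by
    obtain ⟨v, hv | hv⟩ := (hν.dense_isInwardDirection_or_neg hx).nonempty <;>
      exact hv.mem_closure_interior

lemma eqOn_of_eqOn_interior {Y : Type*} [TopologicalSpace Y] [T2Space Y] {f g : E → Y}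
    (hν : IsOutwardNormal S ν) (hf : ContinuousOn f S) (hg : ContinuousOn g S)
    (h : EqOn f g (interior S)) : EqOn f g S :=
  h.of_subset_closure hf hg interior_subset hν.subset_closure_interior

lemma fderivWithin_eq_zero_of_isLocalMaxOn (hν : IsOutwardNormal S ν) (hx : x ∈ S)
    (hmax : IsLocalMaxOn u S x) (hN : HasZeroNormalDeriv S ν u) : fderivWithin ℝ u S x = 0 := by
  have hinward {v : E} (hv : IsInwardDirection S x v) : fderivWithin ℝ u S x v ≤ 0 :=
    hmax.fderivWithin_nonpos hv.mem_posTangentConeAt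
  suffices hle : ∀ v, fderivWithin ℝ u S x v ≤ 0 by
    ext v
    exact le_antisymm (hle v) (by simpa using hle (-v))
  intro v
  by_cases hint : x ∈ interior S
  · exact hinward (isInwardDirection_of_mem_interior hint v)
  have hfr : x ∈ frontier S := ⟨subset_closure hx, hint⟩
  -- Subtracting a large multiple of the normal makes `v` inward without changing the derivative.
  set k := (⟪ν x, v⟫_ℝ + 1) / ‖ν x‖ ^ 2
  have hobtuse : ⟪ν x, v - k • ν x⟫_ℝ < 0 := by
    have := norm_ne_zero_iff.2 (hν.ne_zero x hfr)
    rw [inner_sub_right, real_inner_smul_right, real_inner_self_eq_norm_sq,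
      div_mul_cancel₀ _ (by positivity)]
    linarith
  simpa [hN x hfr] using hinward (hν.isInwardDirection x hfr _ hobtuse)

end IsOutwardNormal

end OutwardNormal

section Laplacian

variable {E : Type*} [NormedAddCommGroup E] [InnerProductSpace ℝ E] [FiniteDimensional ℝ E]
  {F : Type*} [NormedAddCommGroup F] [NormedSpace ℝ F]
  {S : Set E} {ν : E → E} {f g : E → F} {u : E → ℝ} {x : E}

lemma eqOn_laplacianWithin (hS : UniqueDiffOn ℝ S) (h : EqOn f g S) :
    EqOn (Δ[S] f) (Δ[S] g) S := fun _ hx =>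
  have hnhds := laplacianWithin_congr_nhdsWithin (h.eventuallyEq_of_mem self_mem_nhdsWithin) hS
  hnhds.self_of_nhdsWithin hx

lemma contDiffOn_laplacianWithin {m n : WithTop ℕ∞} (hS : UniqueDiffOn ℝ S)
    (hf : ContDiffOn ℝ n f S) (hmn : m + 2 ≤ n) : ContDiffOn ℝ m (Δ[S] f) S := by
  set b := stdOrthonormalBasis ℝ E
  have hformula : ContDiffOn ℝ m
      (fun x => ∑ i, iteratedFDerivWithin ℝ 2 f S x ![b i, b i]) S :=
    ContDiffOn.sum fun i _ x hx =>
      ((hf x hx).iteratedFDerivWithin_right hS hmn hx).continuousLinearMap_comp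
        (ContinuousMultilinearMap.apply ℝ (fun _ : Fin 2 => E) F ![b i, b i])
  exact hformula.congr fun x hx =>
    laplacianWithin_eq_iteratedFDerivWithin_stdOrthonormalBasis f hS hx

lemma laplacianWithin_nonpos_of_isLocalMaxOn (hν : IsOutwardNormal S ν)
    (hu : ContDiffOn ℝ 2 u S) (hN : HasZeroNormalDeriv S ν u) (hx : x ∈ S)
    (hmax : IsLocalMaxOn u S x) : (Δ[S] u) x ≤ 0 := by
  have hS := hν.uniqueDiffOn
  have hcrit := hν.fderivWithin_eq_zero_of_isLocalMaxOn hx hmax hN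
  have hu' : DifferentiableOn ℝ (fderivWithin ℝ u S) S :=
    (hu.fderivWithin hS (m := 1) (by norm_num)).differentiableOn one_ne_zero
  set Q := fderivWithin ℝ (fderivWithin ℝ u S) S x
  have hinward {v : E} (hv : IsInwardDirection S x v) : Q v v ≤ 0 :=
    second_fderivWithin_nonpos_of_isLocalMaxOn (hu.differentiableOn two_ne_zero) (hu' x hx) hx hmax
      hcrit hv
  -- `Q` is even and continuous, so its sign on inward directions propagates to all vectors.
  have hQ (v : E) : Q v v ≤ 0 := by
    have hclosed : IsClosed {v | Q v v ≤ 0} := isClosed_le (by fun_prop) continuous_const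
    refine hclosed.closure_subset_iff.2 ?_ (hν.dense_isInwardDirection_or_neg hx v)
    rintro v (hv | hv)
    · exact hinward hv
    · simpa using hinward hv
  rw [laplacianWithin_eq_iteratedFDerivWithin_stdOrthonormalBasis u hS hx]
  refine Finset.sum_nonpos fun i _ => ?_
  rw [iteratedFDerivWithin_two_apply' u hS hx]
  exact hQ _

lemma nonpos_of_laplacianWithin_eq_smul (hSc : IsCompact S) (hν : IsOutwardNormal S ν)
    (hu : ContDiffOn ℝ 2 u S) (hN : HasZeroNormalDeriv S ν u) {c : ℝ} (hc : 0 < c)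
    (hΔ : EqOn (Δ[S] u) (c • u) S) (hx : x ∈ S) : u x ≤ 0 := by
  obtain ⟨y, hy, hmax⟩ := hSc.exists_isMaxOn ⟨x, hx⟩ hu.continuousOn
  have hle := laplacianWithin_nonpos_of_isLocalMaxOn hν hu hN hy hmax.localize
  rw [hΔ hy] at hle
  exact (hmax hx).trans (nonpos_of_mul_nonpos_right hle hc)

lemma eqOn_zero_of_laplacianWithin_eq_smul (hSc : IsCompact S) (hν : IsOutwardNormal S ν)
    (hu : ContDiffOn ℝ 2 u S) (hN : HasZeroNormalDeriv S ν u) {c : ℝ} (hc : 0 < c)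
    (hΔ : EqOn (Δ[S] u) (c • u) S) : EqOn u 0 S := fun x hx => by
  have hS := hν.uniqueDiffOn
  have hΔneg : EqOn (Δ[S] ((-1 : ℝ) • u)) (c • (-1 : ℝ) • u) S := fun y hy => by
    rw [laplacianWithin_smul (-1 : ℝ) (hu y hy) hS hy, hΔ hy, smul_comm]
    rfl
  have hneg := nonpos_of_laplacianWithin_eq_smul hSc hν (hu.const_smul (-1 : ℝ))
    (hN.const_smul hS hSc.isClosed (-1)) hc hΔneg hx
  refine le_antisymm (nonpos_of_laplacianWithin_eq_smul hSc hν hu hN hc hΔ hx) ?_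
  simpa using hneg

end Laplacian

section Eigenvalue

variable {E : Type*} [NormedAddCommGroup E] [InnerProductSpace ℝ E] [FiniteDimensional ℝ E]
  {S : Set E} {ν : E → E} {μ : ℝ}

/-- `μ` is a Neumann eigenvalue of `-Δ` on the domain `interior S`, where `S` is the closure of the
domain, all derivatives are taken within `S`, and `ν` is the normal field. -/
def IsNeumannEigenvalue (S : Set E) (ν : E → E) (μ : ℝ) : Prop :=
  ∃ u : E → ℝ, ContDiffOn ℝ ∞ u S ∧ (∃ x ∈ S, u x ≠ 0) ∧
    EqOn (Δ[S] u) ((-μ) • u) (interior S) ∧ HasZeroNormalDeriv S ν u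

/-- `Υ` is a Neumann eigenvalue of `Δ²` on the domain `interior S`, with the conventions of
`IsNeumannEigenvalue`. -/
def IsBiharmonicNeumannEigenvalue (S : Set E) (ν : E → E) (Υ : ℝ) : Prop :=
  ∃ u : E → ℝ, ContDiffOn ℝ ∞ u S ∧ (∃ x ∈ S, u x ≠ 0) ∧
    EqOn (Δ[S] (Δ[S] u)) (Υ • u) (interior S) ∧ HasZeroNormalDeriv S ν u ∧
    HasZeroNormalDeriv S ν (Δ[S] u)

lemma IsNeumannEigenvalue.isBiharmonicNeumannEigenvalue_sq (h : IsNeumannEigenvalue S ν μ)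
    (hSc : IsClosed S) (hν : IsOutwardNormal S ν) : IsBiharmonicNeumannEigenvalue S ν (μ ^ 2) := by
  obtain ⟨u, hu, hne, hΔ, hN⟩ := h
  have hS := hν.uniqueDiffOn
  have hΔS : EqOn (Δ[S] u) ((-μ) • u) S :=
    hν.eqOn_of_eqOn_interior
      (contDiffOn_laplacianWithin (m := ∞) hS hu le_rfl).continuousOn
      (hu.continuousOn.const_smul _) hΔ
  refine ⟨u, hu, hne, fun x hx => ?_, hN, (hN.const_smul hS hSc _).congr hSc hΔS⟩
  have hxS := interior_subset hx
  calc (Δ[S] (Δ[S] u)) x = (Δ[S] ((-μ) • u)) x := eqOn_laplacianWithin hS hΔS hxS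
    _ = (-μ) • (Δ[S] u) x := laplacianWithin_smul (-μ) ((hu x hxS).of_le ENat.LEInfty.out) hS hxS
    _ = (μ ^ 2 • u) x := by
      rw [hΔ hx]
      simp only [Pi.smul_apply, smul_eq_mul]
      ring

lemma IsBiharmonicNeumannEigenvalue.isNeumannEigenvalue (hμ : 0 < μ)
    (h : IsBiharmonicNeumannEigenvalue S ν (μ ^ 2)) (hSc : IsCompact S)
    (hν : IsOutwardNormal S ν) : IsNeumannEigenvalue S ν μ := by
  obtain ⟨u, hu, ⟨y, hy, huy⟩, hΔ, hN, hNΔ⟩ := h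
  have hS := hν.uniqueDiffOn
  have hΔu : ContDiffOn ℝ ∞ (Δ[S] u) S := contDiffOn_laplacianWithin hS hu le_rfl
  have hμu : ContDiffOn ℝ ∞ (μ • u) S := hu.const_smul μ
  have hle : (2 : WithTop ℕ∞) ≤ ∞ := ENat.LEInfty.out
  refine ⟨(Δ[S] u) - μ • u, hΔu.sub hμu, ?_, fun x hx => ?_, ?_⟩
  · by_contra! hzero
    exact huy <| eqOn_zero_of_laplacianWithin_eq_smul hSc hν (hu.of_le hle) hN hμ
      (fun x hx => sub_eq_zero.1 (hzero x hx)) hy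
  · have hxS := interior_subset hx
    have hux := (hu x hxS).of_le hle
    calc (Δ[S] ((Δ[S] u) - μ • u)) x
        = (Δ[S] (Δ[S] u)) x - μ • (Δ[S] u) x := by
          rw [((hΔu x hxS).of_le hle).laplacianWithin_sub ((hμu x hxS).of_le hle) hS hxS,
            laplacianWithin_smul μ hux hS hxS]
      _ = ((-μ) • ((Δ[S] u) - μ • u)) x := by
          rw [hΔ hx]
          simp only [Pi.smul_apply, Pi.sub_apply, smul_eq_mul]
          ring
  · exact hNΔ.sub (hN.const_smul hS hSc.isClosed μ) hS hSc.isClosed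
      (hΔu.differentiableOn (by simp)) (hμu.differentiableOn (by simp))

theorem first_biharmonic_neumann_eigenvalue_ball_general (hSc : IsCompact S)
    (hν : IsOutwardNormal S ν) (hμ : IsLeast {μ : ℝ | 0 < μ ∧ IsNeumannEigenvalue S ν μ} μ) :
    IsLeast {Υ : ℝ | 0 < Υ ∧ IsBiharmonicNeumannEigenvalue S ν Υ} (μ ^ 2) := by
  obtain ⟨⟨hμ_pos, hμ_eig⟩, hμ_least⟩ := hμ
  refine ⟨⟨by positivity, hμ_eig.isBiharmonicNeumannEigenvalue_sq hSc.isClosed hν⟩, ?_⟩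
  rintro Υ ⟨hΥ_pos, hΥ⟩
  have hsqrt_pos : 0 < √Υ := Real.sqrt_pos.2 hΥ_pos
  rw [← Real.sq_sqrt hΥ_pos.le] at hΥ
  have hle : μ ≤ √Υ := hμ_least ⟨hsqrt_pos, hΥ.isNeumannEigenvalue hsqrt_pos hSc hν⟩
  exact (Real.le_sqrt hμ_pos.le hΥ_pos.le).1 hle

end Eigenvalue

section Ball

variable {n : ℕ} {R : ℝ}

lemma isOutwardNormal_closedBall {E : Type*} [NormedAddCommGroup E] [InnerProductSpace ℝ E]
    (hR : 0 < R) : IsOutwardNormal (closedBall (0 : E) R) (fun x => ‖x‖⁻¹ • x) := by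
  have hnorm {x : E} (hx : x ∈ frontier (closedBall (0 : E) R)) : ‖x‖ = R := by
    simpa [frontier_closedBall (0 : E) hR.ne'] using hx
  refine ⟨fun x hx => ?_, fun x hx v hv => ?_⟩
  · have hx₀ : ‖x‖ ≠ 0 := by rw [hnorm hx]; exact hR.ne'
    exact smul_ne_zero (inv_ne_zero hx₀) (norm_ne_zero_iff.1 hx₀)
  have hinner : ⟪x, v⟫_ℝ < 0 := by
    rw [real_inner_smul_left, hnorm hx] at hv
    exact (pos_iff_neg_of_mul_neg hv).1 (inv_pos.2 hR)
  have hcont : ContinuousAt (fun t : ℝ => 2 * ⟪x, v⟫_ℝ + t * ‖v‖ ^ 2) 0 := by fun_prop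
  have hneg : ∀ᶠ t in 𝓝[>] (0 : ℝ), 2 * ⟪x, v⟫_ℝ + t * ‖v‖ ^ 2 < 0 :=
    (hcont.eventually_lt_const (by linarith)).filter_mono nhdsWithin_le_nhds
  filter_upwards [hneg, self_mem_nhdsWithin] with t ht (ht₀ : 0 < t)
  rw [interior_closedBall (0 : E) hR.ne', mem_ball_zero_iff]
  refine lt_of_pow_lt_pow_left₀ 2 hR.le ?_
  calc ‖x + t • v‖ ^ 2 = R ^ 2 + t * (2 * ⟪x, v⟫_ℝ + t * ‖v‖ ^ 2) := by
        rw [norm_add_sq_real, real_inner_smul_right, norm_smul, mul_pow, Real.norm_eq_abs, sq_abs,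
          hnorm hx]
        ring
    _ < R ^ 2 := add_lt_of_neg_right _ (mul_neg_of_pos_of_neg ht₀ ht)

lemma eqOn_lapWithin_laplacianWithin {S : Set (EuclideanSpace ℝ (Fin n))}
    {u : EuclideanSpace ℝ (Fin n) → ℝ} (hS : UniqueDiffOn ℝ S) (hu : ContDiffOn ℝ 2 u S) :
    EqOn (lapWithin S u) (Δ[S] u) S := fun x hx => by
  have hu' : DifferentiableWithinAt ℝ (fderivWithin ℝ u S) S x :=
    (hu.fderivWithin hS (m := 1) (by norm_num)).differentiableOn one_ne_zero x hx
  rw [laplacianWithin_eq_iteratedFDerivWithin_orthonormalBasis u hS hx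
    (EuclideanSpace.basisFun (Fin n) ℝ)]
  refine Finset.sum_congr rfl fun i _ => ?_
  rw [iteratedFDerivWithin_two_apply' u hS hx, EuclideanSpace.basisFun_apply,
    fderivWithin_clm_apply (hS x hx) hu' (differentiableWithinAt_const _)]
  simp

lemma isLapNeumannEigenvalueBall_iff (hR : 0 < R) {μ : ℝ} :
    IsLapNeumannEigenvalueBall n R μ ↔
      IsNeumannEigenvalue (closedBall (0 : EuclideanSpace ℝ (Fin n)) R) (fun x => ‖x‖⁻¹ • x) μ := by
  have hS := (isOutwardNormal_closedBall (E := EuclideanSpace ℝ (Fin n)) hR).uniqueDiffOn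
  refine exists_congr fun u => and_congr_right fun hu => and_congr_right fun _ => and_congr ?_ ?_
  · have hlap := eqOn_lapWithin_laplacianWithin hS (hu.of_le ENat.LEInfty.out)
    rw [interior_closedBall _ hR.ne']
    exact forall₂_congr fun x hx => by rw [hlap (ball_subset_closedBall hx)]; rfl
  · simp [HasZeroNormalDeriv, frontier_closedBall _ hR.ne']

lemma isBiLapNeumannEigenvalueBall_iff (hR : 0 < R) {Υ : ℝ} :
    IsBiLapNeumannEigenvalueBall n R Υ ↔
      IsBiharmonicNeumannEigenvalue (closedBall (0 : EuclideanSpace ℝ (Fin n)) R)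
        (fun x => ‖x‖⁻¹ • x) Υ := by
  have hS := (isOutwardNormal_closedBall (E := EuclideanSpace ℝ (Fin n)) hR).uniqueDiffOn
  refine exists_congr fun u => and_congr_right fun hu => and_congr_right fun _ => ?_
  have hlap := eqOn_lapWithin_laplacianWithin hS (hu.of_le ENat.LEInfty.out)
  have hΔu : ContDiffOn ℝ ∞ (Δ[closedBall 0 R] u) (closedBall 0 R) :=
    contDiffOn_laplacianWithin hS hu le_rfl
  have hbilap : EqOn (lapWithin (closedBall 0 R) (lapWithin (closedBall 0 R) u))
      (Δ[closedBall 0 R] (Δ[closedBall 0 R] u)) (closedBall 0 R) :=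
    (eqOn_lapWithin_laplacianWithin hS ((hΔu.congr hlap).of_le ENat.LEInfty.out)).trans
      (eqOn_laplacianWithin hS hlap)
  refine and_congr ?_ (and_congr ?_ ?_)
  · rw [interior_closedBall _ hR.ne']
    exact forall₂_congr fun x hx => by rw [hbilap (ball_subset_closedBall hx)]; rfl
  · simp [HasZeroNormalDeriv, frontier_closedBall _ hR.ne']
  · simp only [HasZeroNormalDeriv, frontier_closedBall _ hR.ne', mem_sphere_zero_iff_norm]
    refine forall₂_congr fun x hx => ?_
    rw [fderivWithin_congr hlap (hlap (mem_closedBall_zero_iff.2 hx.le))]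

end Ball

/-- **The first nonzero Neumann eigenvalue of `Δ²` on a ball is the square of that of `Δ`.**
For `n ≥ 2` and `R > 0`, `Υ₁(B_R(0)) = μ₁(B_R(0))²`. -/
theorem first_biharmonic_neumann_eigenvalue_ball {n : ℕ} (hn : 2 ≤ n) (R : ℝ) (hR : 0 < R)
    (μ₁ Υ₁ : ℝ)
    (hμ : IsLeast {μ : ℝ | 0 < μ ∧ IsLapNeumannEigenvalueBall n R μ} μ₁)
    (hΥ : IsLeast {Υ : ℝ | 0 < Υ ∧ IsBiLapNeumannEigenvalueBall n R Υ} Υ₁) :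
    Υ₁ = μ₁ ^ 2 := by
  simp only [isLapNeumannEigenvalueBall_iff hR] at hμ
  simp only [isBiLapNeumannEigenvalueBall_iff hR] at hΥ
  exact hΥ.unique <| first_biharmonic_neumann_eigenvalue_ball_general (isCompact_closedBall 0 R)
    (isOutwardNormal_closedBall hR) hμ
end
end

section
/- Let n ≥ 2, m ≥ 1, R > 0, and let B_R(0) be the open ball of radius R centered at the origin in ℝⁿ. Then the first nonzero Neumann eigenvalue of the even-multi-Laplacian operator Δ^{2m} on the ball equals the 2m-th power of the first nonzero Neumann eigenvalue of the Laplacian on the ball: Υ̂₁(B_R(0)) = μ₁(B_R(0))^{2m}. -/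
open MeasureTheory Set Metric

noncomputable section

/-!
Let `N` be the space of smooth functions on the closed ball with vanishing normal derivative. By
Green's formula, `A = -Δ` is symmetric and nonnegative on `N` for the `L²` inner product. Suppose
that `Aʲu ∈ N` for all `j < k` and that `Aᵏu = λᵏu` with `λ > 0`, and put `w = Au - λu`. Factoring
`Aᵏ - λᵏ` gives `∑ i < k, λ ^ (k - 1 - i) Aⁱw = 0`; pairing with `w` turns this into a vanishing sum
of nonnegative terms, whose `i = 0` term `λ ^ (k - 1) ‖w‖²` forces `w = 0`. So the eigenfunctions of
`Δ^(2m)` for `λ^(2m)` are exactly the eigenfunctions of `-Δ` for `λ`.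
-/

open Filter Topology
open scoped ContDiff

section PositiveOperator

variable {V : Type*} [AddCommGroup V] [Module ℝ V] {A : Module.End ℝ V} {N : Submodule ℝ V}

theorem pow_apply_mem_of_pow_apply_eq_smul {k : ℕ} (hk : 0 < k) {c : ℝ} {u : V}
    (hu : ∀ j < k, (A ^ j) u ∈ N) (hAu : (A ^ k) u = c • u) (j : ℕ) : (A ^ j) u ∈ N := by
  induction j using Nat.strong_induction_on with
  | _ j ih =>
    rcases lt_or_ge j k with hjk | hkj
    · exact hu j hjk
    · obtain ⟨i, rfl⟩ := Nat.exists_eq_add_of_le' hkj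
      rw [pow_add, Module.End.mul_apply, hAu, map_smul]
      exact N.smul_mem c (ih i (by lia))

variable {B : LinearMap.BilinForm ℝ V}

theorem bilin_pow_apply_nonneg (hB : B.IsNonneg)
    (hsymm : ∀ v ∈ N, ∀ w ∈ N, B (A v) w = B v (A w)) (hpos : ∀ v ∈ N, 0 ≤ B v (A v)) (j : ℕ)
    {v : V} (hv : ∀ i, (A ^ i) v ∈ N) : 0 ≤ B v ((A ^ j) v) := by
  induction j using Nat.twoStepInduction generalizing v with
  | zero => exact hB.nonneg v
  | one => simpa using hpos v (by simpa using hv 0)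
  | more j ih _ =>
    have hAv : ∀ i, (A ^ i) (A v) ∈ N := fun i => by
      simpa only [← Module.End.mul_apply, ← pow_succ] using hv (i + 1)
    calc 0 ≤ B (A v) ((A ^ j) (A v)) := ih hAv
      _ = B v ((A ^ (j + 2)) v) := by
        rw [hsymm v (by simpa using hv 0) _ (hAv j)]
        simp only [← Module.End.mul_apply, ← pow_succ, ← pow_succ']

theorem apply_eq_smul_of_pow_apply_eq_smul (hB : B.IsNonneg) (hdef : ∀ v, B v v = 0 → v = 0)
    (hsymm : ∀ v ∈ N, ∀ w ∈ N, B (A v) w = B v (A w)) (hpos : ∀ v ∈ N, 0 ≤ B v (A v))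
    {k : ℕ} (hk : 0 < k) {c : ℝ} (hc : 0 < c) {u : V} (hu : ∀ j < k, (A ^ j) u ∈ N)
    (hAu : (A ^ k) u = c ^ k • u) : A u = c • u := by
  set w := A u - c • u with hw
  have hwN (i : ℕ) : (A ^ i) w ∈ N := by
    have huN := pow_apply_mem_of_pow_apply_eq_smul hk hu hAu
    rw [hw, map_sub, map_smul, ← Module.End.mul_apply, ← pow_succ]
    exact N.sub_mem (huN (i + 1)) (N.smul_mem c (huN i))
  have hsum : ∑ i ∈ Finset.range k, c ^ (k - 1 - i) • (A ^ i) w = 0 := by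
    have hcomm : Commute A (algebraMap ℝ (Module.End ℝ V) c) := (Algebra.commutes c A).symm
    have hfactor := congrArg (· u) (hcomm.geom_sum₂_mul k)
    simpa [← map_pow, Module.algebraMap_end_apply, hAu, ← hw] using hfactor
  have hterm_nonneg (i : ℕ) (_ : i ∈ Finset.range k) : 0 ≤ c ^ (k - 1 - i) * B w ((A ^ i) w) :=
    mul_nonneg (by positivity) (bilin_pow_apply_nonneg hB hsymm hpos i hwN)
  have hterm_zero := (Finset.sum_eq_zero_iff_of_nonneg hterm_nonneg).1
    (by simpa using congrArg (B w) hsum) 0 (Finset.mem_range.2 hk)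
  exact sub_eq_zero.1 (hdef w (by simpa [hc.ne'] using hterm_zero))

end PositiveOperator

section SmoothTransition

theorem deriv_smoothTransition_of_one_lt {t : ℝ} (ht : 1 < t) :
    deriv Real.smoothTransition t = 0 := by
  have h : Real.smoothTransition =ᶠ[𝓝 t] fun _ => 1 := by
    filter_upwards [Ioi_mem_nhds ht] with y hy
    exact Real.smoothTransition.one_of_one_le hy.le
  rw [h.deriv_eq, deriv_const]

theorem deriv_smoothTransition_of_neg {t : ℝ} (ht : t < 0) :
    deriv Real.smoothTransition t = 0 := by
  have h : Real.smoothTransition =ᶠ[𝓝 t] fun _ => 0 := by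
    filter_upwards [Iio_mem_nhds ht] with y hy
    exact Real.smoothTransition.zero_of_nonpos hy.le
  rw [h.deriv_eq, deriv_const]

theorem hasCompactSupport_deriv_smoothTransition :
    HasCompactSupport (deriv Real.smoothTransition) := by
  refine HasCompactSupport.intro (isCompact_Icc (a := (0 : ℝ)) (b := 1)) fun t ht => ?_
  rw [mem_Icc, not_and_or, not_le, not_le] at ht
  exact ht.elim deriv_smoothTransition_of_neg deriv_smoothTransition_of_one_lt

theorem exists_abs_deriv_smoothTransition_mul_le :
    ∃ M, ∀ t : ℝ, |deriv Real.smoothTransition t * (t + 1)| ≤ M := by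
  have hcont : Continuous (deriv Real.smoothTransition) :=
    (Real.smoothTransition.contDiff (n := 1)).continuous_deriv le_rfl
  exact hasCompactSupport_deriv_smoothTransition.mul_right.exists_bound_of_continuous
    (hcont.mul (continuous_id.add continuous_const))

end SmoothTransition

section RadialCutoff

variable {E : Type*} [NormedAddCommGroup E]

/-- A smooth radial cutoff, supported where `a * (R ^ 2 - ‖x‖ ^ 2) ≥ 1` and equal to `1` where
`a * (R ^ 2 - ‖x‖ ^ 2) ≥ 2`; it exhausts the ball of radius `R` as `a → ∞`. -/
def radialCutoff (R a : ℝ) (x : E) : ℝ :=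
  Real.smoothTransition (a * (R ^ 2 - ‖x‖ ^ 2) - 1)

theorem tsupport_radialCutoff_subset {R a : ℝ} (hR : 0 < R) (ha : 0 < a) :
    tsupport (radialCutoff R a : E → ℝ) ⊆ ball 0 R := by
  have hclosed : IsClosed {x : E | 1 ≤ a * (R ^ 2 - ‖x‖ ^ 2)} :=
    isClosed_le continuous_const (by fun_prop)
  have hsupp : Function.support (radialCutoff R a : E → ℝ) ⊆ {x | 1 ≤ a * (R ^ 2 - ‖x‖ ^ 2)} := by
    intro x hx
    by_contra hlt
    rw [mem_ofPred_eq, not_le] at hlt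
    exact hx (Real.smoothTransition.zero_of_nonpos (by linarith))
  intro x hx
  have hx1 : 0 < a * (R ^ 2 - ‖x‖ ^ 2) := one_pos.trans_le (closure_minimal hsupp hclosed hx)
  rw [mem_ball_zero_iff]
  exact lt_of_pow_lt_pow_left₀ 2 hR.le (sub_pos.1 (pos_of_mul_pos_right hx1 ha.le))

theorem eventually_one_lt_mul_sub_sq_norm {R : ℝ} {x : E} (hx : x ∈ ball 0 R) :
    ∀ᶠ a : ℝ in atTop, 1 < a * (R ^ 2 - ‖x‖ ^ 2) - 1 := by
  rw [mem_ball_zero_iff] at hx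
  have hpos : 0 < R ^ 2 - ‖x‖ ^ 2 := sub_pos.2 (pow_lt_pow_left₀ hx (norm_nonneg x) two_ne_zero)
  filter_upwards [(tendsto_id.atTop_mul_const hpos).eventually_gt_atTop 2] with a ha
  simp only [id] at ha
  linarith

/-- Across the boundary layer the gradient of the cutoff is of order `a`, while a flux vanishing
on the sphere is of order `1 / a` there. -/
theorem exists_abs_slope_radialCutoff_mul_le {H : E → ℝ} {R C : ℝ}
    (hH : ∀ x ∈ closedBall 0 R, |H x| ≤ C * (R ^ 2 - ‖x‖ ^ 2)) :
    ∃ M, ∀ a, 0 < a → ∀ x ∈ closedBall (0 : E) R,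
      |2 * a * deriv Real.smoothTransition (a * (R ^ 2 - ‖x‖ ^ 2) - 1) * H x| ≤ M := by
  obtain ⟨M, hM⟩ := exists_abs_deriv_smoothTransition_mul_le
  refine ⟨2 * |C| * M, fun a ha x hx => ?_⟩
  have hρ : 0 ≤ R ^ 2 - ‖x‖ ^ 2 :=
    sub_nonneg.2 (pow_le_pow_left₀ (norm_nonneg x) (mem_closedBall_zero_iff.1 hx) 2)
  set d := deriv Real.smoothTransition (a * (R ^ 2 - ‖x‖ ^ 2) - 1)
  have hd : |d| * (a * (R ^ 2 - ‖x‖ ^ 2)) ≤ M := by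
    have h := hM (a * (R ^ 2 - ‖x‖ ^ 2) - 1)
    rwa [sub_add_cancel, abs_mul, abs_of_nonneg (mul_nonneg ha.le hρ)] at h
  calc |2 * a * d * H x| = 2 * a * |d| * |H x| := by
        rw [abs_mul, abs_mul, abs_of_pos (by positivity : 0 < 2 * a)]
    _ ≤ 2 * a * |d| * (|C| * (R ^ 2 - ‖x‖ ^ 2)) := by
        gcongr
        exact (hH x hx).trans (mul_le_mul_of_nonneg_right (le_abs_self C) hρ)
    _ = 2 * |C| * (|d| * (a * (R ^ 2 - ‖x‖ ^ 2))) := by ring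
    _ ≤ 2 * |C| * M := by gcongr

variable [InnerProductSpace ℝ E]

theorem contDiff_radialCutoff (R a : ℝ) {k : ℕ∞} : ContDiff ℝ k (radialCutoff R a : E → ℝ) :=
  Real.smoothTransition.contDiff.comp
    ((contDiff_const.mul (contDiff_const.sub (contDiff_norm_sq ℝ))).sub contDiff_const)

theorem fderiv_radialCutoff_apply (R a : ℝ) (x v : E) :
    fderiv ℝ (radialCutoff R a) x v =
      -(2 * a) * deriv Real.smoothTransition (a * (R ^ 2 - ‖x‖ ^ 2) - 1) * inner ℝ x v := by
  have hinner := (((hasStrictFDerivAt_norm_sq x).hasFDerivAt.const_sub (R ^ 2)).const_mul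
    a).sub_const 1
  have houter : HasDerivAt Real.smoothTransition
      (deriv Real.smoothTransition (a * (R ^ 2 - ‖x‖ ^ 2) - 1)) (a * (R ^ 2 - ‖x‖ ^ 2) - 1) :=
    ((Real.smoothTransition.contDiff (n := 1)).differentiable one_ne_zero _).hasDerivAt
  have hfderiv : HasFDerivAt (radialCutoff R a) _ x := houter.comp_hasFDerivAt x hinner
  rw [hfderiv.fderiv]
  simp only [smul_apply, neg_apply, smul_eq_mul, coe_innerSL_apply, nsmul_eq_mul]
  push_cast
  ring

end RadialCutoff

section DivergenceTheorem

theorem uniqueDiffOn_closedBall {E : Type*} [NormedAddCommGroup E] [NormedSpace ℝ E] (x : E)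
    {R : ℝ} (hR : 0 < R) : UniqueDiffOn ℝ (closedBall x R) :=
  uniqueDiffOn_convex (convex_closedBall x R)
    ⟨x, ball_subset_interior_closedBall (mem_ball_self hR)⟩

theorem exists_norm_le_mul_sub_norm_of_eq_zero_on_sphere {E F : Type*} [NormedAddCommGroup E]
    [NormedSpace ℝ E] [FiniteDimensional ℝ E] [NormedAddCommGroup F] [NormedSpace ℝ F] {R : ℝ}
    (hR : 0 < R) {h : E → F} (hh : ContDiffOn ℝ 1 h (closedBall 0 R))
    (h0 : ∀ x, ‖x‖ = R → h x = 0) :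
    ∃ C, 0 ≤ C ∧ ∀ x ∈ closedBall 0 R, x ≠ 0 → ‖h x‖ ≤ C * (R - ‖x‖) := by
  obtain ⟨C, hC⟩ := (isCompact_closedBall (0 : E) R).exists_bound_of_continuousOn
    (hh.continuousOn_fderivWithin (uniqueDiffOn_closedBall 0 hR) le_rfl)
  refine ⟨C, (norm_nonneg _).trans (hC 0 (mem_closedBall_self hR.le)), fun x hx hx0 => ?_⟩
  have hxpos : 0 < ‖x‖ := norm_pos_iff.2 hx0
  have hxR : ‖x‖ ≤ R := mem_closedBall_zero_iff.1 hx
  set y := (R / ‖x‖) • x with hy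
  have hyR : ‖y‖ = R := by
    rw [hy, norm_smul, Real.norm_of_nonneg (by positivity), div_mul_cancel₀ _ hxpos.ne']
  have hdist : ‖x - y‖ = R - ‖x‖ := by
    have hratio : 1 ≤ R / ‖x‖ := (one_le_div hxpos).2 hxR
    rw [norm_sub_rev, show y - x = (R / ‖x‖ - 1) • x by rw [sub_smul, one_smul], norm_smul,
      Real.norm_of_nonneg (sub_nonneg.2 hratio), sub_mul, one_mul, div_mul_cancel₀ _ hxpos.ne']
  have hmean := (convex_closedBall (0 : E) R).norm_image_sub_le_of_norm_fderivWithin_le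
    (hh.differentiableOn one_ne_zero) hC (mem_closedBall_zero_iff.2 hyR.le) hx
  rwa [h0 y hyR, sub_zero, hdist] at hmean

theorem exists_abs_flux_le_mul_sub_sq_norm {E ι : Type*} [NormedAddCommGroup E]
    [InnerProductSpace ℝ E] [FiniteDimensional ℝ E] [Fintype ι] {R : ℝ} {e : ι → E}
    {F : ι → E → ℝ} (hR : 0 < R)
    (hF : ∀ i, ContDiffOn ℝ 1 (F i) (closedBall 0 R))
    (hflux : ∀ x, ‖x‖ = R → ∑ i, inner ℝ x (e i) * F i x = 0) :
    ∃ C, ∀ x ∈ closedBall 0 R, |∑ i, inner ℝ x (e i) * F i x| ≤ C * (R ^ 2 - ‖x‖ ^ 2) := by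
  have hsmooth : ContDiffOn ℝ 1 (fun x => ∑ i, inner ℝ x (e i) * F i x) (closedBall 0 R) :=
    ContDiffOn.sum fun i _ => (contDiffOn_id.inner ℝ contDiffOn_const).mul (hF i)
  obtain ⟨C, hC0, hC⟩ := exists_norm_le_mul_sub_norm_of_eq_zero_on_sphere hR hsmooth hflux
  refine ⟨C / R, fun x hx => ?_⟩
  have hxR : ‖x‖ ≤ R := mem_closedBall_zero_iff.1 hx
  rcases eq_or_ne x 0 with rfl | hx0
  · simp only [inner_zero_left, zero_mul, Finset.sum_const_zero, abs_zero, norm_zero,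
      zero_pow two_ne_zero, sub_zero]
    positivity
  · calc |∑ i, inner ℝ x (e i) * F i x| ≤ C * (R - ‖x‖) := hC x hx hx0
      _ ≤ C * (R - ‖x‖) * ((R + ‖x‖) / R) :=
        le_mul_of_one_le_right (mul_nonneg hC0 (sub_nonneg.2 hxR))
          ((one_le_div hR).2 (le_add_of_nonneg_right (norm_nonneg x)))
      _ = C / R * (R ^ 2 - ‖x‖ ^ 2) := by ring

variable {E : Type*} [NormedAddCommGroup E] [MeasurableSpace E] [BorelSpace E]
  (μ : Measure E)

section

variable [NormedSpace ℝ E] [FiniteDimensional ℝ E] [μ.IsAddHaarMeasure]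

theorem setIntegral_mul_fderivWithin_eq_neg {K : Set E} (hK : IsCompact K) (hKu : UniqueDiffOn ℝ K)
    {φ f : E → ℝ} (hφ : ContDiff ℝ 1 φ) (hφK : tsupport φ ⊆ interior K)
    (hf : ContDiffOn ℝ 1 f K) (v : E) :
    ∫ x in K, φ x * fderivWithin ℝ f K x v ∂μ = -∫ x in K, fderiv ℝ φ x v * f x ∂μ := by
  have hφ_out {x : E} (hx : x ∉ K) : x ∉ tsupport φ := fun h => hx (interior_subset (hφK h))
  have hφ0 {x : E} (hx : x ∉ K) : φ x = 0 := image_eq_zero_of_notMem_tsupport (hφ_out hx)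
  have hdφ0 {x : E} (hx : x ∉ K) : fderiv ℝ φ x = 0 := fderiv_of_notMem_tsupport ℝ (hφ_out hx)
  have hderiv : (fun x => φ x * fderivWithin ℝ f K x v) = fun x => φ x * fderiv ℝ f x v := by
    funext x
    by_cases hx : x ∈ tsupport φ
    · rw [fderivWithin_of_mem_nhds (mem_interior_iff_mem_nhds.1 (hφK hx))]
    · simp only [image_eq_zero_of_notMem_tsupport hx, zero_mul]
  have hint {g : E → ℝ} (hg : ContinuousOn g K) (hg0 : ∀ x ∉ K, g x = 0) : Integrable g μ :=
    (hg.integrableOn_compact hK).integrable_of_forall_notMem_eq_zero hg0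
  have hdφ : Continuous fun x => fderiv ℝ φ x v :=
    (hφ.continuous_fderiv one_ne_zero).clm_apply continuous_const
  have hdf : ContinuousOn (fun x => fderivWithin ℝ f K x v) K :=
    (hf.continuousOn_fderivWithin hKu le_rfl).clm_apply continuousOn_const
  rw [setIntegral_eq_integral_of_forall_compl_eq_zero fun x hx => by rw [hφ0 hx, zero_mul],
    setIntegral_eq_integral_of_forall_compl_eq_zero fun x hx => by
      rw [hdφ0 hx, zero_apply, zero_mul], hderiv]
  refine integral_mul_fderiv_eq_neg_fderiv_mul_of_integrable
    (hint (hdφ.continuousOn.mul hf.continuousOn) fun x hx => by rw [hdφ0 hx, zero_apply, zero_mul])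
    (hderiv ▸ hint (hφ.continuous.continuousOn.mul hdf) fun x hx => by rw [hφ0 hx, zero_mul])
    (hint (hφ.continuous.continuousOn.mul hf.continuousOn) fun x hx => by rw [hφ0 hx, zero_mul])
    (fun x _ => hφ.differentiable one_ne_zero x) fun x hx => ?_
  exact (hf.contDiffAt (mem_interior_iff_mem_nhds.1 (hφK hx))).differentiableAt one_ne_zero

theorem ae_restrict_closedBall_mem_ball {R : ℝ} (hR : 0 < R) :
    ∀ᵐ x ∂μ.restrict (closedBall 0 R), x ∈ ball 0 R := by
  filter_upwards [ae_restrict_mem measurableSet_closedBall, ae_restrict_of_ae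
    (measure_eq_zero_iff_ae_notMem.1 (Measure.addHaar_sphere_of_ne_zero μ (0 : E) hR.ne'))]
    with x hx hx'
  exact lt_of_le_of_ne hx hx'

theorem tendsto_setIntegral_radialCutoff_mul {R : ℝ} (hR : 0 < R) {D : E → ℝ}
    (hD : ContinuousOn D (closedBall 0 R)) :
    Tendsto (fun a => ∫ x in closedBall 0 R, radialCutoff R a x * D x ∂μ) atTop
      (𝓝 (∫ x in closedBall 0 R, D x ∂μ)) := by
  refine tendsto_integral_filter_of_dominated_convergence (fun x => ‖D x‖)
    (.of_forall fun a => ?_) (.of_forall fun a => .of_forall fun x => ?_)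
    (hD.integrableOn_compact (isCompact_closedBall 0 R)).norm ?_
  · exact ((Real.smoothTransition.continuous.comp (by fun_prop)).continuousOn.mul
      hD).aestronglyMeasurable measurableSet_closedBall
  · rw [norm_mul, radialCutoff, Real.norm_of_nonneg (Real.smoothTransition.nonneg _)]
    exact mul_le_of_le_one_left (norm_nonneg _) (Real.smoothTransition.le_one _)
  · filter_upwards [ae_restrict_closedBall_mem_ball μ hR] with x hx
    refine tendsto_const_nhds.congr' ?_
    filter_upwards [eventually_one_lt_mul_sub_sq_norm hx] with a ha
    rw [radialCutoff, Real.smoothTransition.one_of_one_le ha.le, one_mul]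

theorem tendsto_setIntegral_slope_radialCutoff_mul {R : ℝ} (hR : 0 < R) {H : E → ℝ}
    (hH : ContinuousOn H (closedBall 0 R)) {C : ℝ}
    (hHC : ∀ x ∈ closedBall 0 R, |H x| ≤ C * (R ^ 2 - ‖x‖ ^ 2)) :
    Tendsto (fun a => ∫ x in closedBall 0 R,
      2 * a * deriv Real.smoothTransition (a * (R ^ 2 - ‖x‖ ^ 2) - 1) * H x ∂μ) atTop (𝓝 0) := by
  have hη : Continuous (deriv Real.smoothTransition) :=
    (Real.smoothTransition.contDiff (n := 1)).continuous_deriv le_rfl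
  have : IsFiniteMeasure (μ.restrict (closedBall 0 R)) :=
    ⟨by simpa using (isCompact_closedBall (0 : E) R).measure_lt_top⟩
  obtain ⟨M, hM⟩ := exists_abs_slope_radialCutoff_mul_le hHC
  rw [← integral_zero E ℝ (μ := μ.restrict (closedBall 0 R))]
  refine tendsto_integral_filter_of_dominated_convergence (fun _ => M)
    (.of_forall fun a => ?_) ?_ (integrable_const M) ?_
  · exact ((continuous_const.mul (hη.comp (by fun_prop))).continuousOn.mul
      hH).aestronglyMeasurable measurableSet_closedBall
  · filter_upwards [eventually_gt_atTop 0] with a ha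
    filter_upwards [ae_restrict_mem measurableSet_closedBall] with x hx
    exact hM a ha x hx
  · filter_upwards [ae_restrict_closedBall_mem_ball μ hR] with x hx
    refine tendsto_const_nhds.congr' ?_
    filter_upwards [eventually_one_lt_mul_sub_sq_norm hx] with a ha
    rw [deriv_smoothTransition_of_one_lt ha, mul_zero, zero_mul]

end

variable [InnerProductSpace ℝ E] [FiniteDimensional ℝ E] [μ.IsAddHaarMeasure]
  {ι : Type*} [Fintype ι] {R : ℝ} {e : ι → E} {F : ι → E → ℝ}

theorem setIntegral_radialCutoff_mul_divergence {a : ℝ} (hR : 0 < R) (ha : 0 < a)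
    (hF : ∀ i, ContDiffOn ℝ 1 (F i) (closedBall 0 R)) :
    ∫ x in closedBall 0 R, radialCutoff R a x *
        ∑ i, fderivWithin ℝ (F i) (closedBall 0 R) x (e i) ∂μ =
      ∫ x in closedBall 0 R, 2 * a * deriv Real.smoothTransition (a * (R ^ 2 - ‖x‖ ^ 2) - 1) *
        ∑ i, inner ℝ x (e i) * F i x ∂μ := by
  have hK := isCompact_closedBall (0 : E) R
  have hKu := uniqueDiffOn_closedBall (0 : E) hR
  have hφ : ContDiff ℝ 1 (radialCutoff R a : E → ℝ) := contDiff_radialCutoff R a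
  have hφK : tsupport (radialCutoff R a : E → ℝ) ⊆ interior (closedBall 0 R) :=
    (tsupport_radialCutoff_subset hR ha).trans ball_subset_interior_closedBall
  have hparts (i : ι) :=
    setIntegral_mul_fderivWithin_eq_neg μ hK hKu hφ hφK (hF i) (e i)
  have hint_left (i : ι) : IntegrableOn
      (fun x => radialCutoff R a x * fderivWithin ℝ (F i) (closedBall 0 R) x (e i))
      (closedBall 0 R) μ :=
    (hφ.continuous.continuousOn.mul (((hF i).continuousOn_fderivWithin hKu le_rfl).clm_apply
      continuousOn_const)).integrableOn_compact hK
  have hint_right (i : ι) : IntegrableOn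
      (fun x => fderiv ℝ (radialCutoff R a) x (e i) * F i x) (closedBall 0 R) μ :=
    (((hφ.continuous_fderiv one_ne_zero).clm_apply continuous_const).continuousOn.mul
      (hF i).continuousOn).integrableOn_compact hK
  simp only [Finset.mul_sum]
  rw [integral_finsetSum _ fun i _ => hint_left i, Finset.sum_congr rfl fun i _ => hparts i,
    Finset.sum_neg_distrib, ← integral_finsetSum _ fun i _ => hint_right i, ← integral_neg]
  simp only [fderiv_radialCutoff_apply, ← Finset.sum_neg_distrib]
  congr! 3
  ring

/-- The divergence theorem for the field `∑ i, F i • e i`, tangent to the sphere: integrate by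
parts against a radial cutoff and remove the cutoff by dominated convergence. -/
theorem setIntegral_divergence_eq_zero (hR : 0 < R)
    (hF : ∀ i, ContDiffOn ℝ 1 (F i) (closedBall 0 R))
    (hflux : ∀ x, ‖x‖ = R → ∑ i, inner ℝ x (e i) * F i x = 0) :
    ∫ x in closedBall 0 R, ∑ i, fderivWithin ℝ (F i) (closedBall 0 R) x (e i) ∂μ = 0 := by
  have hdiv : ContinuousOn (fun x => ∑ i, fderivWithin ℝ (F i) (closedBall 0 R) x (e i))
      (closedBall 0 R) := continuousOn_finsetSum _ fun i _ =>
    ((hF i).continuousOn_fderivWithin (uniqueDiffOn_closedBall 0 hR) le_rfl).clm_apply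
      continuousOn_const
  have hflux_cont : ContinuousOn (fun x => ∑ i, inner ℝ x (e i) * F i x) (closedBall 0 R) :=
    continuousOn_finsetSum _ fun i _ =>
      (continuousOn_id.inner continuousOn_const).mul (hF i).continuousOn
  obtain ⟨C, hC⟩ := exists_abs_flux_le_mul_sub_sq_norm hR hF hflux
  refine tendsto_nhds_unique (tendsto_setIntegral_radialCutoff_mul μ hR hdiv)
    ((tendsto_setIntegral_slope_radialCutoff_mul μ hR hflux_cont hC).congr' ?_)
  filter_upwards [eventually_gt_atTop 0] with a ha
  exact (setIntegral_radialCutoff_mul_divergence μ hR ha hF).symm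

end DivergenceTheorem

section SmoothFunctions

variable {E : Type*} [NormedAddCommGroup E] [NormedSpace ℝ E] {S : Set E}

/-- The algebra `C^∞(S)` of real functions smooth on `S`. Its elements are extended by zero off
`S`, so that two of them are equal as soon as they agree on `S`. -/
def smoothFunctionsOn (S : Set E) : NonUnitalSubalgebra ℝ (E → ℝ) where
  carrier := {f | ContDiffOn ℝ ∞ f S ∧ ∀ x ∉ S, f x = 0}
  add_mem' hf hg := ⟨hf.1.add hg.1, fun x hx => by
    rw [Pi.add_apply, hf.2 x hx, hg.2 x hx, add_zero]⟩
  zero_mem' := ⟨contDiffOn_const, fun _ _ => rfl⟩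
  mul_mem' hf hg := ⟨hf.1.mul hg.1, fun x hx => by rw [Pi.mul_apply, hf.2 x hx, zero_mul]⟩
  smul_mem' c f hf := ⟨hf.1.const_smul c, fun x hx => by
    rw [Pi.smul_apply, hf.2 x hx, smul_zero]⟩

namespace smoothFunctionsOn

instance : CoeFun (smoothFunctionsOn S) fun _ => E → ℝ := ⟨Subtype.val⟩

theorem contDiffOn (f : smoothFunctionsOn S) : ContDiffOn ℝ ∞ f S := f.2.1

theorem differentiableWithinAt (f : smoothFunctionsOn S) {x : E} (hx : x ∈ S) :
    DifferentiableWithinAt ℝ f S x :=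
  (contDiffOn f).differentiableOn (by simp) x hx

theorem ext_of_eqOn {f g : smoothFunctionsOn S} (h : EqOn f g S) : f = g := by
  ext x
  by_cases hx : x ∈ S
  · exact h hx
  · rw [f.2.2 x hx, g.2.2 x hx]

theorem ext_of_eqOn_interior (hS : S ⊆ closure (interior S)) {f g : smoothFunctionsOn S}
    (h : EqOn f g (interior S)) : f = g :=
  ext_of_eqOn (h.of_subset_closure (contDiffOn f).continuousOn (contDiffOn g).continuousOn
    interior_subset hS)

/-- The element of `C^∞(S)` given by the restriction to `S` of a function smooth on `S`. -/
def ofContDiffOn (u : E → ℝ) (hu : ContDiffOn ℝ ∞ u S) : smoothFunctionsOn S :=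
  ⟨S.indicator u, hu.congr (eqOn_indicator (f := u)), fun _ hx => indicator_of_notMem hx u⟩

theorem eqOn_ofContDiffOn (u : E → ℝ) (hu : ContDiffOn ℝ ∞ u S) : EqOn (ofContDiffOn u hu) u S :=
  eqOn_indicator

variable (hS : UniqueDiffOn ℝ S)

/-- The directional derivative `f ↦ ∂f/∂v` on `C^∞(S)`. -/
def dirDeriv (v : E) : smoothFunctionsOn S →ₗ[ℝ] smoothFunctionsOn S where
  toFun f := ofContDiffOn (fun x => fderivWithin ℝ f S x v)
    (((contDiffOn f).fderivWithin hS (by norm_cast)).clm_apply contDiffOn_const)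
  map_add' f g := ext_of_eqOn fun x hx => by
    simp [eqOn_ofContDiffOn _ _ hx, fderivWithin_add (hS x hx) (differentiableWithinAt f hx)
      (differentiableWithinAt g hx)]
  map_smul' c f := ext_of_eqOn fun x hx => by
    simp [eqOn_ofContDiffOn _ _ hx,
      fderivWithin_const_smul (hS x hx) (differentiableWithinAt f hx)]

theorem eqOn_dirDeriv (v : E) {f : smoothFunctionsOn S} {u : E → ℝ} (hfu : EqOn f u S) :
    EqOn (dirDeriv hS v f) (fun x => fderivWithin ℝ u S x v) S := fun x hx => by
  change S.indicator (fun y => fderivWithin ℝ f S y v) x = _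
  rw [indicator_of_mem hx, fderivWithin_congr' hfu hx]

theorem dirDeriv_apply (v : E) (f : smoothFunctionsOn S) {x : E} (hx : x ∈ S) :
    dirDeriv hS v f x = fderivWithin ℝ f S x v :=
  eqOn_dirDeriv hS v (eqOn_refl f S) hx

theorem dirDeriv_mul (v : E) (f g : smoothFunctionsOn S) :
    dirDeriv hS v (f * g) = dirDeriv hS v f * g + f * dirDeriv hS v g :=
  ext_of_eqOn fun x hx => by
    refine (dirDeriv_apply hS v _ hx).trans ?_
    rw [show ((f * g : smoothFunctionsOn S) : E → ℝ) = fun y => f y * g y from rfl,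
      fderivWithin_fun_mul (hS x hx) (differentiableWithinAt f hx) (differentiableWithinAt g hx)]
    simp only [add_apply, smul_apply, smul_eq_mul, AddMemClass.coe_add, MulMemClass.coe_mul,
      Pi.add_apply, Pi.mul_apply, dirDeriv_apply hS v _ hx]
    ring

section Integral

variable [MeasurableSpace E] [OpensMeasurableSpace E] (hSc : IsCompact S) (μ : Measure E)
  [IsFiniteMeasureOnCompacts μ]

/-- Integration over the compact set `S`. -/
def integral : smoothFunctionsOn S →ₗ[ℝ] ℝ where
  toFun f := ∫ x in S, f x ∂μ
  map_add' f g := integral_add ((contDiffOn f).continuousOn.integrableOn_compact hSc)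
    ((contDiffOn g).continuousOn.integrableOn_compact hSc)
  map_smul' c f := integral_const_mul c f

/-- The `L²` inner product `∫ x in S, f x * g x ∂μ` on `C^∞(S)`. -/
def l2Form : LinearMap.BilinForm ℝ (smoothFunctionsOn S) :=
  (LinearMap.mul ℝ (smoothFunctionsOn S)).compr₂ (integral hSc μ)

theorem l2Form_apply (f g : smoothFunctionsOn S) : l2Form hSc μ f g = integral hSc μ (f * g) := rfl

theorem l2Form_comm (f g : smoothFunctionsOn S) : l2Form hSc μ f g = l2Form hSc μ g f := by
  rw [l2Form_apply, l2Form_apply, mul_comm]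

theorem isNonneg_l2Form : (l2Form hSc μ).IsNonneg :=
  ⟨fun f => integral_nonneg fun x => mul_self_nonneg (f x)⟩

theorem eq_zero_of_l2Form_self_eq_zero [μ.IsOpenPosMeasure] (hS : S ⊆ closure (interior S))
    {f : smoothFunctionsOn S} (hf : l2Form hSc μ f f = 0) : f = 0 := by
  have hcont := (contDiffOn (f * f)).continuousOn
  have hae : (f * f : smoothFunctionsOn S) =ᵐ[μ.restrict S] fun _ => (0 : ℝ) :=
    (integral_eq_zero_iff_of_nonneg (fun x => mul_self_nonneg (f x))
      (hcont.integrableOn_compact hSc)).1 hf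
  have heq := Measure.eqOn_of_ae_eq hae hcont continuousOn_const hS
  exact ext_of_eqOn fun x hx => mul_self_eq_zero.1 (heq hx)

end Integral

section Laplacian

variable {n : ℕ} {S : Set (EuclideanSpace ℝ (Fin n))} (hS : UniqueDiffOn ℝ S)

/-- The partial derivative `∂/∂xᵢ` on `C^∞(S)`. -/
def partialDeriv (i : Fin n) : Module.End ℝ (smoothFunctionsOn S) :=
  dirDeriv hS (EuclideanSpace.single i 1)

/-- The Laplacian `∑ i, ∂²/∂xᵢ²` on `C^∞(S)`. -/
def laplacian : Module.End ℝ (smoothFunctionsOn S) :=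
  ∑ i, partialDeriv hS i ^ 2

theorem eqOn_laplacian_lapWithin {f : smoothFunctionsOn S} {u : EuclideanSpace ℝ (Fin n) → ℝ}
    (hfu : EqOn f u S) : EqOn (laplacian hS f) (lapWithin S u) S := by
  intro x hx
  simp only [laplacian, lapWithin, LinearMap.sum_apply, pow_two, Module.End.mul_apply,
    AddSubmonoidClass.coe_finsetSum, Finset.sum_apply]
  exact Finset.sum_congr rfl fun i _ => eqOn_dirDeriv hS _ (eqOn_dirDeriv hS _ hfu) hx

theorem eqOn_laplacian_pow_iterate_lapWithin {f : smoothFunctionsOn S}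
    {u : EuclideanSpace ℝ (Fin n) → ℝ} (hfu : EqOn f u S) (j : ℕ) :
    EqOn ((laplacian hS ^ j) f) ((lapWithin S)^[j] u) S := by
  induction j with
  | zero => exact hfu
  | succ j ih =>
    rw [pow_succ', Module.End.mul_apply, Function.iterate_succ_apply']
    exact eqOn_laplacian_lapWithin hS ih

end Laplacian

end smoothFunctionsOn

end SmoothFunctions

section NeumannLaplacian

open smoothFunctionsOn

section

variable {E : Type*} [NormedAddCommGroup E] [NormedSpace ℝ E] {R : ℝ}

/-- The functions in `C^∞` of the closed ball with vanishing normal derivative on the sphere. -/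
def neumannFunctions (hR : 0 < R) : Submodule ℝ (smoothFunctionsOn (closedBall (0 : E) R)) where
  carrier := {f | ∀ x, ‖x‖ = R → dirDeriv (uniqueDiffOn_closedBall 0 hR) (‖x‖⁻¹ • x) f x = 0}
  add_mem' hf hg x hx := by
    rw [map_add]
    exact (congrArg₂ (· + ·) (hf x hx) (hg x hx)).trans (add_zero 0)
  zero_mem' x _ := by rw [map_zero]; rfl
  smul_mem' c f hf x hx := by
    rw [map_smul]
    exact mul_eq_zero_of_right c (hf x hx)

theorem mem_neumannFunctions_iff_of_eqOn (hR : 0 < R)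
    {f : smoothFunctionsOn (closedBall (0 : E) R)} {u : E → ℝ} (hfu : EqOn f u (closedBall 0 R)) :
    f ∈ neumannFunctions hR ↔
      ∀ x, ‖x‖ = R → fderivWithin ℝ u (closedBall 0 R) x (‖x‖⁻¹ • x) = 0 :=
  forall₂_congr fun x hx => by
    rw [eqOn_dirDeriv _ _ hfu (mem_closedBall_zero_iff.2 hx.le)]

theorem closedBall_subset_closure_interior (hR : 0 < R) :
    closedBall (0 : E) R ⊆ closure (interior (closedBall 0 R)) := by
  rw [interior_closedBall _ hR.ne', closure_ball _ hR.ne']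

end

variable {n : ℕ} {R : ℝ}

local notation "𝔹" => closedBall (0 : EuclideanSpace ℝ (Fin n)) R

theorem sum_inner_mul_partialDeriv_eq_zero (hR : 0 < R) {g : smoothFunctionsOn 𝔹}
    (hg : g ∈ neumannFunctions hR) {x : EuclideanSpace ℝ (Fin n)} (hx : ‖x‖ = R) :
    ∑ i, inner ℝ x (EuclideanSpace.single i 1) *
      partialDeriv (uniqueDiffOn_closedBall 0 hR) i g x = 0 := by
  have hx_mem : x ∈ 𝔹 := mem_closedBall_zero_iff.2 hx.le
  have hradial := (mem_neumannFunctions_iff_of_eqOn hR (eqOn_refl g _)).1 hg x hx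
  rw [map_smul, smul_eq_mul, mul_eq_zero_iff_left (by rw [hx]; positivity)] at hradial
  simp only [partialDeriv, dirDeriv_apply _ _ _ hx_mem]
  calc _ = fderivWithin ℝ g 𝔹 x (∑ i, inner ℝ (EuclideanSpace.basisFun (Fin n) ℝ i) x •
          EuclideanSpace.basisFun (Fin n) ℝ i) := by
        simp [real_inner_comm]
    _ = 0 := by rw [OrthonormalBasis.sum_repr', hradial]

theorem integral_sum_partialDeriv_eq_zero (hR : 0 < R) {F : Fin n → smoothFunctionsOn 𝔹}
    (hF : ∀ x, ‖x‖ = R → ∑ i, inner ℝ x (EuclideanSpace.single i 1) * F i x = 0) :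
    smoothFunctionsOn.integral (isCompact_closedBall 0 R) volume
      (∑ i, partialDeriv (uniqueDiffOn_closedBall 0 hR) i (F i)) = 0 := by
  rw [← setIntegral_divergence_eq_zero volume hR (fun i => (contDiffOn (F i)).of_le (by simp)) hF]
  refine setIntegral_congr_fun measurableSet_closedBall fun x hx => ?_
  simp only [AddSubmonoidClass.coe_finsetSum, Finset.sum_apply, partialDeriv,
    dirDeriv_apply _ _ _ hx]

theorem l2Form_laplacian_eq_neg_sum (hR : 0 < R) (f : smoothFunctionsOn 𝔹) {g : smoothFunctionsOn 𝔹}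
    (hg : g ∈ neumannFunctions hR) :
    l2Form (isCompact_closedBall 0 R) volume f (laplacian (uniqueDiffOn_closedBall 0 hR) g) =
      -∑ i, l2Form (isCompact_closedBall 0 R) volume
        (partialDeriv (uniqueDiffOn_closedBall 0 hR) i f)
        (partialDeriv (uniqueDiffOn_closedBall 0 hR) i g) := by
  set D := partialDeriv (uniqueDiffOn_closedBall (0 : EuclideanSpace ℝ (Fin n)) hR)
  have hdiv := integral_sum_partialDeriv_eq_zero hR (F := fun i => f * D i g) fun x hx => by
    calc _ = f x * ∑ i, inner ℝ x (EuclideanSpace.single i 1) * D i g x := by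
          rw [Finset.mul_sum]
          exact Finset.sum_congr rfl fun i _ => mul_left_comm _ _ _
      _ = 0 := by rw [sum_inner_mul_partialDeriv_eq_zero hR hg hx, mul_zero]
  have hleibniz (i : Fin n) : D i (f * D i g) = D i f * D i g + f * (D i ^ 2) g := by
    rw [pow_two, Module.End.mul_apply]
    exact dirDeriv_mul _ _ _ _
  rw [Finset.sum_congr rfl fun i _ => hleibniz i, Finset.sum_add_distrib, ← Finset.mul_sum,
    map_add, map_sum, add_comm] at hdiv
  rw [laplacian, LinearMap.sum_apply]
  exact eq_neg_of_add_eq_zero_left hdiv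

theorem l2Form_laplacian_comm (hR : 0 < R) {f g : smoothFunctionsOn 𝔹}
    (hf : f ∈ neumannFunctions hR) (hg : g ∈ neumannFunctions hR) :
    l2Form (isCompact_closedBall 0 R) volume (laplacian (uniqueDiffOn_closedBall 0 hR) f) g =
      l2Form (isCompact_closedBall 0 R) volume f (laplacian (uniqueDiffOn_closedBall 0 hR) g) := by
  rw [l2Form_comm, l2Form_laplacian_eq_neg_sum hR g hf, l2Form_laplacian_eq_neg_sum hR f hg]
  simp only [l2Form_comm _ _ (partialDeriv _ _ f)]

theorem l2Form_laplacian_self_nonpos (hR : 0 < R) {f : smoothFunctionsOn 𝔹}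
    (hf : f ∈ neumannFunctions hR) :
    l2Form (isCompact_closedBall 0 R) volume f
      (laplacian (uniqueDiffOn_closedBall 0 hR) f) ≤ 0 := by
  rw [l2Form_laplacian_eq_neg_sum hR f hf]
  exact neg_nonpos.2 (Finset.sum_nonneg fun i _ => (isNonneg_l2Form _ _).nonneg _)

/-- The polyharmonic Neumann problem `Δ ^ k u = c u` on the ball, with `∂(Δ ^ j u)/∂n = 0` on the
sphere for `j < k`. It specialises to `IsLapNeumannEigenvalueBall` (`k = 1`, `c = -μ`) and to
`IsPolyLapNeumannEigenvalueBall` (`k = 2 * m`). -/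
def IsIterLapNeumannEigenvalueBall (n k : ℕ) (R c : ℝ) : Prop :=
  ∃ u : EuclideanSpace ℝ (Fin n) → ℝ,
    ContDiffOn ℝ ∞ u (closedBall 0 R) ∧
    (∃ x ∈ closedBall (0 : EuclideanSpace ℝ (Fin n)) R, u x ≠ 0) ∧
    (∀ x ∈ ball (0 : EuclideanSpace ℝ (Fin n)) R,
      (lapWithin (closedBall 0 R))^[k] u x = c * u x) ∧
    (∀ j < k, ∀ x : EuclideanSpace ℝ (Fin n), ‖x‖ = R →
      fderivWithin ℝ ((lapWithin (closedBall 0 R))^[j] u) (closedBall 0 R) x (‖x‖⁻¹ • x) = 0)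

theorem isLapNeumannEigenvalueBall_iff_isIterLap {μ : ℝ} :
    IsLapNeumannEigenvalueBall n R μ ↔ IsIterLapNeumannEigenvalueBall n 1 R (-μ) := by
  simp [IsLapNeumannEigenvalueBall, IsIterLapNeumannEigenvalueBall]

theorem isPolyLapNeumannEigenvalueBall_iff_isIterLap {m : ℕ} {Υ : ℝ} :
    IsPolyLapNeumannEigenvalueBall n m R Υ ↔ IsIterLapNeumannEigenvalueBall n (2 * m) R Υ :=
  Iff.rfl

theorem isIterLapNeumannEigenvalueBall_iff_exists_smoothFunctionsOn (hR : 0 < R) {k : ℕ} {c : ℝ} :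
    IsIterLapNeumannEigenvalueBall n k R c ↔
      ∃ f : smoothFunctionsOn 𝔹, f ≠ 0 ∧
        (laplacian (uniqueDiffOn_closedBall 0 hR) ^ k) f = c • f ∧
        ∀ j < k, (laplacian (uniqueDiffOn_closedBall 0 hR) ^ j) f ∈ neumannFunctions hR := by
  have hiter {f : smoothFunctionsOn 𝔹} {u : EuclideanSpace ℝ (Fin n) → ℝ} (hfu : EqOn f u 𝔹)
      (j : ℕ) := eqOn_laplacian_pow_iterate_lapWithin (uniqueDiffOn_closedBall 0 hR) hfu j
  constructor
  · rintro ⟨u, hu, ⟨x₀, hx₀, hux₀⟩, heq, hneumann⟩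
    have hfu := eqOn_ofContDiffOn u hu
    refine ⟨ofContDiffOn u hu, fun h0 => hux₀ ?_, ?_, fun j hj =>
      (mem_neumannFunctions_iff_of_eqOn hR (hiter hfu j)).2 (hneumann j hj)⟩
    · rw [← hfu hx₀, h0]
      rfl
    · refine ext_of_eqOn_interior (closedBall_subset_closure_interior hR) fun x hx => ?_
      have hx_mem := interior_subset hx
      rw [interior_closedBall _ hR.ne'] at hx
      rw [hiter hfu k hx_mem, heq x hx, ← hfu hx_mem]
      rfl
  · rintro ⟨f, hf0, heq, hneumann⟩
    have hff := eqOn_refl f 𝔹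
    refine ⟨f, contDiffOn f, ?_, fun x hx => ?_, fun j hj =>
      (mem_neumannFunctions_iff_of_eqOn hR (hiter hff j)).1 (hneumann j hj)⟩
    · by_contra! hzero
      exact hf0 (ext_of_eqOn hzero)
    · rw [← hiter hff k (ball_subset_closedBall hx), heq]
      rfl

theorem laplacian_apply_eq_smul_of_pow (hR : 0 < R) {k : ℕ} (hk : 0 < k) {μ : ℝ} (hμ : 0 < μ)
    {f : smoothFunctionsOn 𝔹}
    (hf : ∀ j < k, (laplacian (uniqueDiffOn_closedBall 0 hR) ^ j) f ∈ neumannFunctions hR)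
    (hpow : (laplacian (uniqueDiffOn_closedBall 0 hR) ^ k) f = (-μ) ^ k • f) :
    laplacian (uniqueDiffOn_closedBall 0 hR) f = -μ • f := by
  set L := laplacian (uniqueDiffOn_closedBall (0 : EuclideanSpace ℝ (Fin n)) hR)
  have hneg_pow (j : ℕ) : ((-L) ^ j) f = (-1 : ℝ) ^ j • (L ^ j) f := by
    rw [← neg_one_smul ℝ L, smul_pow, LinearMap.smul_apply]
  have hneg : (-L) f = μ • f := by
    refine apply_eq_smul_of_pow_apply_eq_smul (A := -L) (N := neumannFunctions hR)
      (isNonneg_l2Form (isCompact_closedBall 0 R) volume)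
      (fun g => eq_zero_of_l2Form_self_eq_zero _ _ (closedBall_subset_closure_interior hR))
      (fun g hg h hh => ?_) (fun g hg => ?_) hk hμ (fun j hj => ?_) ?_
    · rw [LinearMap.neg_apply, LinearMap.neg_apply, map_neg, map_neg, LinearMap.neg_apply,
        l2Form_laplacian_comm hR hg hh]
    · rw [LinearMap.neg_apply, map_neg]
      exact neg_nonneg.2 (l2Form_laplacian_self_nonpos hR hg)
    · rw [hneg_pow]
      exact Submodule.smul_mem _ _ (hf j hj)
    · rw [hneg_pow, hpow, smul_smul, ← mul_pow, neg_one_mul, neg_neg]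
  rw [← neg_neg (L f), ← LinearMap.neg_apply, hneg, neg_smul]

theorem isIterLapNeumannEigenvalueBall_pow_iff (hR : 0 < R) {k : ℕ} (hk : 0 < k) {μ : ℝ}
    (hμ : 0 < μ) :
    IsIterLapNeumannEigenvalueBall n k R ((-μ) ^ k) ↔
      IsIterLapNeumannEigenvalueBall n 1 R (-μ) := by
  simp only [isIterLapNeumannEigenvalueBall_iff_exists_smoothFunctionsOn hR, pow_one,
    Nat.lt_one_iff, forall_eq, pow_zero, Module.End.one_apply]
  refine exists_congr fun f => and_congr_right fun hf0 => ⟨?_, ?_⟩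
  · rintro ⟨hpow, hneumann⟩
    exact ⟨laplacian_apply_eq_smul_of_pow hR hk hμ hneumann hpow, hneumann 0 hk⟩
  · rintro ⟨heq, hneumann⟩
    have hpow := (Module.End.hasEigenvector_iff.2
      ⟨Module.End.mem_eigenspace_iff.2 heq, hf0⟩).pow_apply
    refine ⟨hpow k, fun j _ => ?_⟩
    rw [hpow j]
    exact Submodule.smul_mem _ _ hneumann

theorem isPolyLapNeumannEigenvalueBall_pow_iff (hR : 0 < R) {m : ℕ} (hm : 1 ≤ m) {μ : ℝ}
    (hμ : 0 < μ) :
    IsPolyLapNeumannEigenvalueBall n m R (μ ^ (2 * m)) ↔ IsLapNeumannEigenvalueBall n R μ := by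
  rw [isPolyLapNeumannEigenvalueBall_iff_isIterLap, isLapNeumannEigenvalueBall_iff_isIterLap,
    ← (even_two_mul m).neg_pow, isIterLapNeumannEigenvalueBall_pow_iff hR (by lia) hμ]

end NeumannLaplacian

theorem first_polyharmonic_neumann_eigenvalue_ball_general {n m : ℕ} (hm : 1 ≤ m) {R μ₁ : ℝ}
    (hR : 0 < R) (hμ : IsLeast {μ : ℝ | 0 < μ ∧ IsLapNeumannEigenvalueBall n R μ} μ₁) :
    IsLeast {Υ : ℝ | 0 < Υ ∧ IsPolyLapNeumannEigenvalueBall n m R Υ} (μ₁ ^ (2 * m)) := by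
  obtain ⟨⟨hμ₁, heig⟩, hleast⟩ := hμ
  refine ⟨⟨pow_pos hμ₁ _, (isPolyLapNeumannEigenvalueBall_pow_iff hR hm hμ₁).2 heig⟩, ?_⟩
  rintro Υ ⟨hΥ, hΥeig⟩
  obtain ⟨μ, hμ, rfl⟩ : ∃ μ : ℝ, 0 < μ ∧ μ ^ (2 * m) = Υ :=
    ⟨Υ ^ ((2 * m : ℕ) : ℝ)⁻¹, Real.rpow_pos_of_pos hΥ _,
      Real.rpow_inv_natCast_pow hΥ.le (by lia)⟩
  exact pow_le_pow_left₀ hμ₁.le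
    (hleast ⟨hμ, (isPolyLapNeumannEigenvalueBall_pow_iff hR hm hμ).1 hΥeig⟩) _

/-- **The first nonzero Neumann eigenvalue of `Δ^(2m)` on a ball is the `2m`-th power of that
of `Δ`.** For `n ≥ 2`, `m ≥ 1` and `R > 0`, `Υ̂₁(B_R(0)) = μ₁(B_R(0))^(2m)`. -/
theorem first_polyharmonic_neumann_eigenvalue_ball {n m : ℕ} (hn : 2 ≤ n) (hm : 1 ≤ m)
    (R : ℝ) (hR : 0 < R) (μ₁ Υ₁ : ℝ)
    (hμ : IsLeast {μ : ℝ | 0 < μ ∧ IsLapNeumannEigenvalueBall n R μ} μ₁)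
    (hΥ : IsLeast {Υ : ℝ | 0 < Υ ∧ IsPolyLapNeumannEigenvalueBall n m R Υ} Υ₁) :
    Υ₁ = μ₁ ^ (2 * m) := by
  exact hΥ.unique (first_polyharmonic_neumann_eigenvalue_ball_general hm hR hμ)
end
end
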